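/- Let 1 ≤ d < r and let M be an indecomposable representation of Γ_r that is not simple. Then: (a) M has the equal d-socle property if and only if Soc_U(M) = M₂ for all U ∈ Gr_{d,r}; (b) M has the equal d-radical property if and only if Rad_U(M) = M₂ for all U ∈ Gr_{d,r}. -/

import Mathlib

open Module LinearMap

universe u

/-- A finite-dimensional representation of the `r`-Kronecker quiver `Γ_r` over `k`:
two finite-dimensional `k`-vector spaces `M₁`, `M₂` and `r` linear maps `M₁ → M₂`. -/
structure KRep (k : Type u) [Field k] (r : ℕ) : Type (u + 1) where
  V1 : Type u
  V2 : Type u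
  [addV1 : AddCommGroup V1]
  [addV2 : AddCommGroup V2]
  [modV1 : Module k V1]
  [modV2 : Module k V2]
  [finV1 : FiniteDimensional k V1]
  [finV2 : FiniteDimensional k V2]
  f : Fin r → V1 →ₗ[k] V2

attribute [instance] KRep.addV1 KRep.addV2 KRep.modV1 KRep.modV2 KRep.finV1 KRep.finV2

variable {k : Type u} [Field k] {r : ℕ}

/-- For `α ∈ k^r`, the operator `x^M_α = ∑ i, αᵢ • M(γᵢ) : M₁ → M₂`. -/
def KRep.x (M : KRep k r) (α : Fin r → k) : M.V1 →ₗ[k] M.V2 :=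
  ∑ i, α i • M.f i

/-- The space `Hom(M, N)` of morphisms of representations, as a `k`-submodule of the
pairs of linear maps `(f₁ : M₁ → N₁, f₂ : M₂ → N₂)`; membership is the condition
`f₂ ∘ M(γᵢ) = N(γᵢ) ∘ f₁` for all `i`. -/
def KHom (M N : KRep k r) : Submodule k ((M.V1 →ₗ[k] N.V1) × (M.V2 →ₗ[k] N.V2)) where
  carrier := {p | ∀ i, p.2 ∘ₗ M.f i = N.f i ∘ₗ p.1}
  add_mem' := by
    intro a b ha hb i
    simp only [Prod.snd_add, Prod.fst_add, LinearMap.add_comp, LinearMap.comp_add, ha i, hb i]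
  zero_mem' := by intro i; simp
  smul_mem' := by
    intro c a ha i
    simp only [Prod.smul_snd, Prod.smul_fst, LinearMap.smul_comp, LinearMap.comp_smul, ha i]

/-- The representation `X_U` attached to a subspace `U ⊆ k^r`:
`(X_U)₁ = k`, `(X_U)₂ = k^r/U`, and `X_U(γᵢ)(c) = c · (eᵢ + U)`. -/
def XU (U : Submodule k (Fin r → k)) : KRep k r where
  V1 := k
  V2 := (Fin r → k) ⧸ U
  f := fun i => LinearMap.toSpanSingleton k _ (Submodule.Quotient.mk (Pi.single i 1))

/-- The `M₁`-part of the socle: `{m ∈ M₁ : x^M_u(m) = 0 for all u ∈ U}`. -/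
def KRep.socKer (M : KRep k r) (U : Submodule k (Fin r → k)) : Submodule k M.V1 :=
  ⨅ u ∈ U, LinearMap.ker (M.x u)

/-- `Soc_U(M) = {m ∈ M₁ : x^M_u(m) = 0 ∀ u ∈ U} ⊕ M₂`, as a subspace of `M₁ ⊕ M₂`. -/
def KRep.soc (M : KRep k r) (U : Submodule k (Fin r → k)) : Submodule k (M.V1 × M.V2) :=
  (M.socKer U).prod ⊤

/-- `Rad_U(M) = ∑_{u ∈ U} x^M_u(M₁) ⊆ M₂`. -/
def KRep.rad (M : KRep k r) (U : Submodule k (Fin r → k)) : Submodule k M.V2 :=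
  ⨆ u ∈ U, LinearMap.range (M.x u)

/-- Direct sum of two representations. -/
def KRep.sum (M N : KRep k r) : KRep k r where
  V1 := M.V1 × N.V1
  V2 := M.V2 × N.V2
  f := fun i => (M.f i).prodMap (N.f i)

/-- Isomorphism of representations. -/
def KIso (M N : KRep k r) : Prop :=
  ∃ (e1 : M.V1 ≃ₗ[k] N.V1) (e2 : M.V2 ≃ₗ[k] N.V2),
    ∀ i, (e2 : M.V2 →ₗ[k] N.V2) ∘ₗ M.f i = N.f i ∘ₗ (e1 : M.V1 →ₗ[k] N.V1)

/-- A representation is nonzero if its dimension vector is not `(0,0)`. -/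
def KRep.Nonzero (M : KRep k r) : Prop :=
  finrank k M.V1 ≠ 0 ∨ finrank k M.V2 ≠ 0

/-- A representation is indecomposable if it is nonzero and not isomorphic to a direct
sum of two nonzero representations. -/
def KRep.Indecomposable (M : KRep k r) : Prop :=
  M.Nonzero ∧ ∀ A B : KRep k r, A.Nonzero → B.Nonzero → ¬ KIso M (A.sum B)

/-- A representation is simple if its dimension vector is `(1,0)` or `(0,1)`. -/
def KRep.IsSimple (M : KRep k r) : Prop :=
  (finrank k M.V1 = 1 ∧ finrank k M.V2 = 0) ∨ (finrank k M.V1 = 0 ∧ finrank k M.V2 = 1)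

/-- `M` has constant `d`-socle rank: `dim_k Soc_U(M)` is independent of `U ∈ Gr_{d,r}`. -/
def KRep.ConstSocRank (d : ℕ) (M : KRep k r) : Prop :=
  ∃ c : ℕ, ∀ U : Submodule k (Fin r → k), finrank k U = d → finrank k (M.soc U) = c

/-- `M` has the equal `d`-socle property: `Soc_U(M)` is independent of `U ∈ Gr_{d,r}`. -/
def KRep.ESP (d : ℕ) (M : KRep k r) : Prop :=
  ∀ U V : Submodule k (Fin r → k), finrank k U = d → finrank k V = d → M.soc U = M.soc V

/-- `M` has constant `d`-radical rank: `dim_k Rad_U(M)` is independent of `U ∈ Gr_{d,r}`. -/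
def KRep.ConstRadRank (d : ℕ) (M : KRep k r) : Prop :=
  ∃ c : ℕ, ∀ U : Submodule k (Fin r → k), finrank k U = d → finrank k (M.rad U) = c

/-- `M` has the equal `d`-radical property: `Rad_U(M)` is independent of `U ∈ Gr_{d,r}`. -/
def KRep.ERP (d : ℕ) (M : KRep k r) : Prop :=
  ∀ U V : Submodule k (Fin r → k), finrank k U = d → finrank k V = d → M.rad U = M.rad V

/-! The `d`-dimensional subspaces cover `k^r`, so if the `M₁`-part of `Soc_U(M)`, or the radical
`Rad_U(M)`, does not depend on `U`, then it is already the one for `U = k^r`, namely the common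
kernel of the maps `M(γᵢ)`, respectively the sum of their images. A nonzero vector in the common
kernel splits off a simple summand of dimension vector `(1,0)`, and a vector of `M₂` outside the sum
of the images splits off one of dimension vector `(0,1)`; an indecomposable representation that is
not simple admits neither. -/

section Subspaces

variable {K V : Type*} [DivisionRing K] [AddCommGroup V] [Module K V]

theorem exists_linearEquiv_apply_eq {u v : V} (hu : u ≠ 0) (hv : v ≠ 0) :
    ∃ g : V ≃ₗ[K] V, g u = v := by
  let eu := LinearEquiv.toSpanNonzeroSingleton K V u hu
  let ev := LinearEquiv.toSpanNonzeroSingleton K V v hv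
  obtain ⟨g, hg⟩ := Submodule.exists_linearEquiv_restrict_eq (eu.symm.trans ev)
  have heu : (eu 1 : V) = u := one_smul K u
  have hev : (ev 1 : V) = v := one_smul K v
  exact ⟨g, by rw [← heu, ← hg, LinearEquiv.trans_apply, eu.symm_apply_apply, hev]⟩

theorem exists_finrank_eq_and_mem {U : Submodule K V} (hU : U ≠ ⊥) (v : V) :
    ∃ W : Submodule K V, finrank K W = finrank K U ∧ v ∈ W := by
  rcases eq_or_ne v 0 with rfl | hv
  · exact ⟨U, rfl, U.zero_mem⟩
  · obtain ⟨u, huU, hu⟩ := U.ne_bot_iff.1 hU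
    obtain ⟨g, rfl⟩ := exists_linearEquiv_apply_eq (K := K) hu hv
    exact ⟨U.map (g : V →ₗ[K] V), g.finrank_map_eq U, Submodule.mem_map_of_mem huU⟩

theorem exists_le_and_isCompl_span_singleton {R : Submodule K V} {w : V} (hw : w ∉ R) :
    ∃ H : Submodule K V, R ≤ H ∧ IsCompl (K ∙ w) H := by
  have hw₀ : w ≠ 0 := fun h => hw (h ▸ R.zero_mem)
  obtain ⟨H, hRH, hH⟩ := ((Submodule.disjoint_span_singleton' hw₀).2 hw).exists_isCompl
  exact ⟨H, hRH, hH.symm⟩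

theorem finrank_eq_one_of_isCompl_span_singleton_bot {v : V} (hv : v ≠ 0)
    (h : IsCompl (K ∙ v) ⊥) : finrank K V = 1 :=
  (finrank_eq_one_iff_of_nonzero v hv).2 (eq_top_of_isCompl_bot h)

end Subspaces

namespace KRep

variable {M : KRep k r}

section SocleRadical

theorem x_single (M : KRep k r) (i : Fin r) : M.x (Pi.single i 1) = M.f i := by
  simp [x, Pi.single_apply, ite_smul]

theorem mem_socKer {U : Submodule k (Fin r → k)} {m : M.V1} :
    m ∈ M.socKer U ↔ ∀ u ∈ U, M.x u m = 0 := by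
  simp [socKer]

theorem range_x_le_rad {U : Submodule k (Fin r → k)} {u : Fin r → k} (hu : u ∈ U) :
    range (M.x u) ≤ M.rad U :=
  le_iSup₂ (f := fun u (_ : u ∈ U) => range (M.x u)) u hu

theorem socKer_anti {U V : Submodule k (Fin r → k)} (h : U ≤ V) : M.socKer V ≤ M.socKer U :=
  biInf_mono h

theorem rad_mono {U V : Submodule k (Fin r → k)} (h : U ≤ V) : M.rad U ≤ M.rad V :=
  biSup_mono h

theorem soc_eq_soc_iff {U V : Submodule k (Fin r → k)} :
    M.soc U = M.soc V ↔ M.socKer U = M.socKer V := by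
  refine ⟨fun h => Submodule.ext fun m => ?_, fun h => by rw [soc, soc, h]⟩
  simpa [soc] using SetLike.ext_iff.1 h (m, 0)

theorem f_eq_zero_of_mem_socKer_top {m : M.V1} (hm : m ∈ M.socKer ⊤) (i : Fin r) :
    M.f i m = 0 :=
  M.x_single i ▸ mem_socKer.1 hm _ trivial

theorem f_mem_rad_top (i : Fin r) (m : M.V1) : M.f i m ∈ M.rad ⊤ :=
  range_x_le_rad (u := Pi.single i 1) Submodule.mem_top ⟨m, by rw [x_single]⟩

end SocleRadical

section EqualSocleRadical

variable {d : ℕ} {U : Submodule k (Fin r → k)}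

theorem ESP.socKer_eq (h : M.ESP d) (hd : 0 < d) (hU : finrank k U = d) :
    M.socKer U = M.socKer ⊤ := by
  refine le_antisymm (fun m hm => mem_socKer.2 fun v _ => ?_) (socKer_anti le_top)
  have hU₀ : U ≠ ⊥ := Submodule.one_le_finrank_iff.1 (hU ▸ hd)
  obtain ⟨W, hW, hvW⟩ := exists_finrank_eq_and_mem hU₀ v
  have hUW : M.socKer U = M.socKer W := soc_eq_soc_iff.1 (h U W hU (hW.trans hU))
  exact mem_socKer.1 (hUW ▸ hm) v hvW

theorem ERP.rad_eq (h : M.ERP d) (hd : 0 < d) (hU : finrank k U = d) : M.rad U = M.rad ⊤ := by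
  refine le_antisymm (rad_mono le_top) (iSup₂_le fun v _ => ?_)
  have hU₀ : U ≠ ⊥ := Submodule.one_le_finrank_iff.1 (hU ▸ hd)
  obtain ⟨W, hW, hvW⟩ := exists_finrank_eq_and_mem hU₀ v
  rw [h U W hU (hW.trans hU)]
  exact range_x_le_rad hvW

theorem esp_iff_forall_soc_eq_soc_top (hd : 0 < d) :
    M.ESP d ↔ ∀ U : Submodule k (Fin r → k), finrank k U = d → M.soc U = M.soc ⊤ :=
  ⟨fun h _ hU => soc_eq_soc_iff.2 (h.socKer_eq hd hU),
    fun h U V hU hV => (h U hU).trans (h V hV).symm⟩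

theorem erp_iff_forall_rad_eq_rad_top (hd : 0 < d) :
    M.ERP d ↔ ∀ U : Submodule k (Fin r → k), finrank k U = d → M.rad U = M.rad ⊤ :=
  ⟨fun h _ hU => h.rad_eq hd hU, fun h U V hU hV => (h U hU).trans (h V hV).symm⟩

end EqualSocleRadical

section Decompositions

/-- The subrepresentation of `M` carried by a pair of subspaces `A₁ ⊆ M₁` and `A₂ ⊆ M₂` with
`M(γᵢ)(A₁) ⊆ A₂` for all `i`, as a representation in its own right. -/
def sub (M : KRep k r) (A₁ : Submodule k M.V1) (A₂ : Submodule k M.V2)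
    (hA : ∀ i, A₁ ≤ A₂.comap (M.f i)) : KRep k r where
  V1 := A₁
  V2 := A₂
  f i := (M.f i).restrict (hA i)

variable {A₁ B₁ : Submodule k M.V1} {A₂ B₂ : Submodule k M.V2}

theorem sub_nonzero_iff (hA : ∀ i, A₁ ≤ A₂.comap (M.f i)) :
    (M.sub A₁ A₂ hA).Nonzero ↔ A₁ ≠ ⊥ ∨ A₂ ≠ ⊥ :=
  or_congr Submodule.finrank_eq_zero.not Submodule.finrank_eq_zero.not

theorem kIso_sum_sub (hA : ∀ i, A₁ ≤ A₂.comap (M.f i)) (hB : ∀ i, B₁ ≤ B₂.comap (M.f i))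
    (h₁ : IsCompl A₁ B₁) (h₂ : IsCompl A₂ B₂) :
    KIso M ((M.sub A₁ A₂ hA).sum (M.sub B₁ B₂ hB)) := by
  let e₁ := Submodule.prodEquivOfIsCompl A₁ B₁ h₁
  let e₂ := Submodule.prodEquivOfIsCompl A₂ B₂ h₂
  refine ⟨e₁.symm, e₂.symm, fun i => LinearMap.ext fun m => e₂.symm_apply_eq.2 ?_⟩
  obtain ⟨⟨a, b⟩, rfl⟩ := e₁.surjective m
  change M.f i (a + b) = e₂ (((M.f i).restrict (hA i)).prodMap ((M.f i).restrict (hB i))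
    (e₁.symm (e₁ (a, b))))
  rw [e₁.symm_apply_apply, map_add]
  rfl

theorem Indecomposable.eq_bot_of_isCompl (hM : M.Indecomposable)
    (hA : ∀ i, A₁ ≤ A₂.comap (M.f i)) (hB : ∀ i, B₁ ≤ B₂.comap (M.f i))
    (h₁ : IsCompl A₁ B₁) (h₂ : IsCompl A₂ B₂) (hne : A₁ ≠ ⊥ ∨ A₂ ≠ ⊥) :
    B₁ = ⊥ ∧ B₂ = ⊥ := by
  by_contra hB₀
  exact hM.2 _ _ ((sub_nonzero_iff hA).2 hne) ((sub_nonzero_iff hB).2 (not_and_or.1 hB₀))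
    (kIso_sum_sub hA hB h₁ h₂)

theorem Indecomposable.socKer_top_eq_bot (hM : M.Indecomposable) (hs : ¬ M.IsSimple) :
    M.socKer ⊤ = ⊥ := by
  refine (Submodule.eq_bot_iff _).2 fun m hm => by_contra fun hm₀ => hs (Or.inl ?_)
  obtain ⟨C, hC⟩ := Submodule.exists_isCompl (k ∙ m)
  have hspan (i : Fin r) : (k ∙ m) ≤ (⊥ : Submodule k M.V2).comap (M.f i) :=
    (Submodule.span_singleton_le_iff_mem _ _).2 (f_eq_zero_of_mem_socKer_top hm i)
  obtain ⟨rfl, htop⟩ := hM.eq_bot_of_isCompl hspan (fun _ _ _ => Submodule.mem_top) hC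
    isCompl_bot_top (Or.inl (Submodule.span_singleton_eq_bot.not.2 hm₀))
  exact ⟨finrank_eq_one_of_isCompl_span_singleton_bot hm₀ hC,
    by rw [← finrank_top, htop, finrank_bot]⟩

theorem Indecomposable.rad_top_eq_top (hM : M.Indecomposable) (hs : ¬ M.IsSimple) :
    M.rad ⊤ = ⊤ := by
  refine Submodule.eq_top_iff'.2 fun w => by_contra fun hw => hs (Or.inr ?_)
  have hw₀ : w ≠ 0 := fun h => hw (h ▸ zero_mem _)
  obtain ⟨H, hH, hwH⟩ := exists_le_and_isCompl_span_singleton hw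
  obtain ⟨htop, rfl⟩ := hM.eq_bot_of_isCompl (fun _ => bot_le)
    (fun i m _ => hH (f_mem_rad_top i m)) isCompl_bot_top hwH
    (Or.inr (Submodule.span_singleton_eq_bot.not.2 hw₀))
  exact ⟨by rw [← finrank_top, htop, finrank_bot],
    finrank_eq_one_of_isCompl_span_singleton_bot hw₀ hwH⟩

end Decompositions

end KRep

/-- Let `1 ≤ d < r` and let `M` be an indecomposable representation of
`Γ_r` that is not simple. Then (a) `M` has the equal `d`-socle property iff
`Soc_U(M) = M₂` for all `U ∈ Gr_{d,r}`, and (b) `M` has the equal `d`-radical property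
iff `Rad_U(M) = M₂` for all `U ∈ Gr_{d,r}`. -/
theorem esp_erp_iff_of_indecomposable (d : ℕ) (hd : 1 ≤ d) (hdr : d < r) (M : KRep k r)
    (hind : M.Indecomposable) (hns : ¬ M.IsSimple) :
    (KRep.ESP d M ↔ ∀ U : Submodule k (Fin r → k), finrank k U = d →
        M.soc U = (⊥ : Submodule k M.V1).prod ⊤) ∧
    (KRep.ERP d M ↔ ∀ U : Submodule k (Fin r → k), finrank k U = d →
        M.rad U = ⊤) := by
  have hsoc : M.soc ⊤ = (⊥ : Submodule k M.V1).prod ⊤ := by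
    rw [KRep.soc, hind.socKer_top_eq_bot hns]
  have hrad : M.rad ⊤ = ⊤ := hind.rad_top_eq_top hns
  exact ⟨hsoc ▸ KRep.esp_iff_forall_soc_eq_soc_top hd,
    hrad ▸ KRep.erp_iff_forall_rad_eq_rad_top hd⟩
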